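/- A matricially normed space P is metrically projective if, and only if, P is a complete direct summand of an \widehat{M}-composed matricially normed space. -/

import Mathlib

open scoped BigOperators
open Matrix

noncomputable section

/-- Block-diagonal sum `u ⊕ w` of two square matrices with entries in `E`. -/
def MatDSum {E : Type*} [Zero E] {m k : ℕ}
    (u : Matrix (Fin m) (Fin m) E) (w : Matrix (Fin k) (Fin k) E) :
    Matrix (Fin (m + k)) (Fin (m + k)) E :=
  Matrix.reindex finSumFinEquiv finSumFinEquiv (Matrix.fromBlocks u 0 0 w)

/-- Left action `S·u` of a scalar matrix on an `E`-valued matrix. -/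
def scalLeft {E : Type*} [AddCommMonoid E] [Module ℂ E] {m : ℕ}
    (S : Matrix (Fin m) (Fin m) ℂ) (u : Matrix (Fin m) (Fin m) E) :
    Matrix (Fin m) (Fin m) E :=
  Matrix.of fun i j => ∑ k, S i k • u k j

/-- Right action `u·S` of a scalar matrix on an `E`-valued matrix. -/
def scalRight {E : Type*} [AddCommMonoid E] [Module ℂ E] {m : ℕ}
    (u : Matrix (Fin m) (Fin m) E) (S : Matrix (Fin m) (Fin m) ℂ) :
    Matrix (Fin m) (Fin m) E :=
  Matrix.of fun i j => ∑ k, S k j • u i k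

/-- The operator norm `‖S‖_o` of a complex scalar matrix, i.e. its norm as an
operator on the euclidean (Hilbert) space `ℂⁿ`. -/
noncomputable def opNorm {m : ℕ} (S : Matrix (Fin m) (Fin m) ℂ) : ℝ :=
  ‖LinearMap.toContinuousLinearMap (Matrix.toEuclideanLin S)‖

/-- The `m`-th amplification of a map `φ : E → F`: apply `φ` entrywise. -/
def matAmpl {E F : Type*} (φ : E → F) {m : ℕ} (u : Matrix (Fin m) (Fin m) E) :
    Matrix (Fin m) (Fin m) F :=
  Matrix.of fun i j => φ (u i j)

/-- The operator `φ^v : M_n → E`, `(λ_{ij}) ↦ Σ_{i,j} λ_{ji} • x_{ij}`, associated with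
`v = (x_{ij}) ∈ M_n(E)`. -/
def matPhi {E : Type*} [AddCommMonoid E] [Module ℂ E] {n : ℕ}
    (v : Matrix (Fin n) (Fin n) E) (a : Matrix (Fin n) (Fin n) ℂ) : E :=
  ∑ i, ∑ j, a j i • v i j

/-- `ν` is a matrix-norm on the complex vector space `E`: each `ν m` is a norm on
`M_m(E)`, and Axioms 1 and 2 of Effros/Ruan hold. -/
def IsMatrixNorm {E : Type} [AddCommGroup E] [Module ℂ E]
    (ν : ∀ m : ℕ, Matrix (Fin m) (Fin m) E → ℝ) : Prop :=
  (∀ (m : ℕ) (u v : Matrix (Fin m) (Fin m) E), ν m (u + v) ≤ ν m u + ν m v) ∧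
  (∀ (m : ℕ) (c : ℂ) (u : Matrix (Fin m) (Fin m) E), ν m (c • u) = ‖c‖ * ν m u) ∧
  (∀ (m : ℕ) (u : Matrix (Fin m) (Fin m) E), ν m u = 0 ↔ u = 0) ∧
  (∀ (m k : ℕ) (u : Matrix (Fin m) (Fin m) E),
      ν (m + k) (MatDSum u (0 : Matrix (Fin k) (Fin k) E)) = ν m u) ∧
  (∀ (m : ℕ) (S : Matrix (Fin m) (Fin m) ℂ) (u : Matrix (Fin m) (Fin m) E),
      ν m (scalLeft S u) ≤ opNorm S * ν m u) ∧
  (∀ (m : ℕ) (u : Matrix (Fin m) (Fin m) E) (S : Matrix (Fin m) (Fin m) ℂ),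
      ν m (scalRight u S) ≤ ν m u * opNorm S)

/-- The set of values `‖(φ^v)_m(u)‖_m` over all proper couples `(E, v)`, i.e. over all
matricially normed spaces `E` and all `v` in the closed unit ball of `M_n(E)`. -/
def hatNormSet (n : ℕ) {m : ℕ}
    (u : Matrix (Fin m) (Fin m) (Matrix (Fin n) (Fin n) ℂ)) : Set ℝ :=
  { r | ∃ (E : Type) (_ : AddCommGroup E) (_ : Module ℂ E)
        (ν : ∀ m' : ℕ, Matrix (Fin m') (Fin m') E → ℝ),
        IsMatrixNorm ν ∧
        ∃ v : Matrix (Fin n) (Fin n) E, ν n v ≤ 1 ∧ r = ν m (matAmpl (matPhi v) u) }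

/-- The matrix-norm of the matricially normed space `M̂_n`:
`‖u‖_m = sup { ‖(φ^v)_m(u)‖_m : (E, v) a proper couple }`. -/
noncomputable def hatNorm (n : ℕ) {m : ℕ}
    (u : Matrix (Fin m) (Fin m) (Matrix (Fin n) (Fin n) ℂ)) : ℝ :=
  sSup (hatNormSet n u)

/-- `φ` is a completely contractive (linear) operator between the matricially normed
spaces `(E, νE)` and `(F, νF)`: every amplification `φ_m` is contractive. -/
def IsCC {E F : Type} [AddCommGroup E] [Module ℂ E] [AddCommGroup F] [Module ℂ F]
    (νE : ∀ m : ℕ, Matrix (Fin m) (Fin m) E → ℝ)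
    (νF : ∀ m : ℕ, Matrix (Fin m) (Fin m) F → ℝ) (φ : E → F) : Prop :=
  IsLinearMap ℂ φ ∧
  ∀ (m : ℕ) (u : Matrix (Fin m) (Fin m) E), νF m (matAmpl φ u) ≤ νE m u

open DirectSum

/-- The `i`-th component matrix of a matrix with entries in a direct sum. -/
def compMat {ι : Type} {E : ι → Type} [∀ i, AddCommGroup (E i)] {m : ℕ}
    (u : Matrix (Fin m) (Fin m) (⨁ i, E i)) (i : ι) :
    Matrix (Fin m) (Fin m) (E i) :=
  Matrix.of fun a b => u a b i

/-- The matrix-norm of the matricial `ℓ¹`-sum of the family `(E i, ν i)`: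
`‖⊕_i u_i‖_m = Σ_i ‖u_i‖_m` (a finite sum, since only finitely many components of a
matrix over the algebraic direct sum are nonzero). -/
noncomputable def l1Norm {ι : Type} {E : ι → Type} [∀ i, AddCommGroup (E i)]
    (ν : ∀ i, ∀ m : ℕ, Matrix (Fin m) (Fin m) (E i) → ℝ)
    (m : ℕ) (u : Matrix (Fin m) (Fin m) (⨁ i, E i)) : ℝ :=
  ∑ᶠ i, ν i m (compMat u i)

/-- `τ` is a completely strictly coisometric operator between the matricially normed
spaces `(E, νE)` and `(F, νF)`: every amplification `τ_m` maps the closed unit ball of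
`M_m(E)` onto the closed unit ball of `M_m(F)`. -/
def IsCSC {E F : Type} [AddCommGroup E] [Module ℂ E] [AddCommGroup F] [Module ℂ F]
    (νE : ∀ m : ℕ, Matrix (Fin m) (Fin m) E → ℝ)
    (νF : ∀ m : ℕ, Matrix (Fin m) (Fin m) F → ℝ) (τ : E → F) : Prop :=
  IsLinearMap ℂ τ ∧
  ∀ m : ℕ, (fun u : Matrix (Fin m) (Fin m) E => matAmpl τ u) ''
      { u | νE m u ≤ 1 } = { w | νF m w ≤ 1 }

/-- The underlying space of an `M̂`-composed matricially normed space: the matricial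
`ℓ¹`-sum of a family of spaces each of which is some `M̂_{d i}`. -/
abbrev HatComposed (ι : Type) (d : ι → ℕ) : Type :=
  ⨁ i : ι, Matrix (Fin (d i)) (Fin (d i)) ℂ

/-- The matrix-norm of the `M̂`-composed space `⊕_i M̂_{d i}`. -/
noncomputable def hatComposedNorm (ι : Type) (d : ι → ℕ) :
    ∀ m : ℕ, Matrix (Fin m) (Fin m) (HatComposed ι d) → ℝ :=
  l1Norm (fun i m (u : Matrix (Fin m) (Fin m) (Matrix (Fin (d i)) (Fin (d i)) ℂ)) =>
    hatNorm (d i) u)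

/-- The matricially normed space `(P, νP)` is metrically projective: for every
completely strictly coisometric operator `τ : E → F` between matricially normed spaces
and every completely contractive operator `φ : P → F` there is a completely contractive
operator `ψ : P → E` with `τ ∘ ψ = φ`. -/
def MetricallyProjective {P : Type} [AddCommGroup P] [Module ℂ P]
    (νP : ∀ m : ℕ, Matrix (Fin m) (Fin m) P → ℝ) : Prop :=
  ∀ (E F : Type) (_ : AddCommGroup E) (_ : Module ℂ E) (_ : AddCommGroup F)
    (_ : Module ℂ F) (νE : ∀ m : ℕ, Matrix (Fin m) (Fin m) E → ℝ)
    (νF : ∀ m : ℕ, Matrix (Fin m) (Fin m) F → ℝ),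
    IsMatrixNorm νE → IsMatrixNorm νF →
    ∀ τ : E → F, IsCSC νE νF τ →
    ∀ φ : P → F, IsCC νP νF φ →
    ∃ ψ : P → E, IsCC νP νE ψ ∧ τ ∘ ψ = φ

/-- `(P, νP)` is a complete direct summand of `(G, νG)`: `P` is completely isometrically
isomorphic to a matricially normed subspace of `G` onto which there is a completely
contractive projection; equivalently, there are a completely isometric linear map
`α : P → G` and a completely contractive `π : G → P` with `π ∘ α = id`. -/
def IsCompleteDirectSummand {P G : Type} [AddCommGroup P] [Module ℂ P]
    [AddCommGroup G] [Module ℂ G]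
    (νP : ∀ m : ℕ, Matrix (Fin m) (Fin m) P → ℝ)
    (νG : ∀ m : ℕ, Matrix (Fin m) (Fin m) G → ℝ) : Prop :=
  ∃ (α : P → G) (π : G → P), IsLinearMap ℂ α ∧
    (∀ (m : ℕ) (u : Matrix (Fin m) (Fin m) P), νG m (matAmpl α u) = νP m u) ∧
    IsCC νG νP π ∧ π ∘ α = id

/-! `M̂_n` represents the unit ball of `M_n(·)`: the completely contractive operators `M̂_n → E` are
exactly the `φ^v` with `‖v‖ ≤ 1`. Lifting such an operator along `τ` therefore amounts to lifting
one element of a unit ball, which is what a completely strictly coisometric `τ` allows, so `M̂_n` is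
metrically projective. Projectivity passes to `ℓ¹`-sums (the coproducts for completely contractive
operators) and to complete direct summands. Conversely, every `P` is a completely strictly
coisometric image of the `ℓ¹`-sum of copies of `M̂_n` indexed by the elements of the unit balls of
the `M_n(P)`; if `P` is projective, a lift of the identity along this operator splits it. -/

section Amplification

lemma matDSum_single_zero {E : Type*} [Zero E] {m : ℕ} (k : ℕ) (a b : Fin m) (x : E) :
    MatDSum (single a b x) (0 : Matrix (Fin k) (Fin k) E) =
      single (Fin.castAdd k a) (Fin.castAdd k b) x := by
  ext i j
  induction i using Fin.addCases <;> induction j using Fin.addCases <;>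
    simp [MatDSum, single_apply, Fin.ext_iff] <;> omega

variable {E F : Type*} [AddCommMonoid E] [Module ℂ E] [AddCommMonoid F] [Module ℂ F]
  {f : E → F} {m n : ℕ}

lemma matAmpl_zero (hf : IsLinearMap ℂ f) : matAmpl f (0 : Matrix (Fin m) (Fin m) E) = 0 :=
  map_zero (hf.mk' f).mapMatrix

lemma matAmpl_add (hf : IsLinearMap ℂ f) (u v : Matrix (Fin m) (Fin m) E) :
    matAmpl f (u + v) = matAmpl f u + matAmpl f v :=
  map_add (hf.mk' f).mapMatrix u v

lemma matAmpl_smul (hf : IsLinearMap ℂ f) (c : ℂ) (u : Matrix (Fin m) (Fin m) E) :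
    matAmpl f (c • u) = c • matAmpl f u :=
  map_smul (hf.mk' f).mapMatrix c u

lemma matAmpl_sum (hf : IsLinearMap ℂ f) {ι : Type*} (s : Finset ι)
    (u : ι → Matrix (Fin m) (Fin m) E) :
    matAmpl f (∑ i ∈ s, u i) = ∑ i ∈ s, matAmpl f (u i) :=
  map_sum (hf.mk' f).mapMatrix u s

lemma matAmpl_scalLeft (hf : IsLinearMap ℂ f) (S : Matrix (Fin m) (Fin m) ℂ)
    (u : Matrix (Fin m) (Fin m) E) : matAmpl f (scalLeft S u) = scalLeft S (matAmpl f u) := by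
  ext i j
  simp only [matAmpl, scalLeft, of_apply, ← hf.mk'_apply, map_sum, map_smul]

lemma matAmpl_scalRight (hf : IsLinearMap ℂ f) (u : Matrix (Fin m) (Fin m) E)
    (S : Matrix (Fin m) (Fin m) ℂ) : matAmpl f (scalRight u S) = scalRight (matAmpl f u) S := by
  ext i j
  simp only [matAmpl, scalRight, of_apply, ← hf.mk'_apply, map_sum, map_smul]

lemma matAmpl_matDSum_zero (hf : IsLinearMap ℂ f) (k : ℕ) (u : Matrix (Fin m) (Fin m) E) :
    matAmpl f (MatDSum u (0 : Matrix (Fin k) (Fin k) E)) = MatDSum (matAmpl f u) 0 := by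
  have hmap : (fromBlocks u 0 0 (0 : Matrix (Fin k) (Fin k) E)).map f =
      fromBlocks (u.map f) 0 0 0 := by
    simp only [fromBlocks_map, Matrix.map_zero f hf.map_zero]
  exact congrArg (reindex finSumFinEquiv finSumFinEquiv) hmap

lemma scalLeft_single_scalRight_single (u : Matrix (Fin m) (Fin m) E) (a b c d : Fin m) :
    scalLeft (single a c 1) (scalRight u (single d b 1)) = single a b (u c d) := by
  ext i j
  by_cases ha : a = i <;> simp [scalLeft, scalRight, single_apply, ite_and, ha]

lemma isLinearMap_matPhi (v : Matrix (Fin n) (Fin n) E) : IsLinearMap ℂ (matPhi v) where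
  map_add a b := by simp only [matPhi, Matrix.add_apply, add_smul, Finset.sum_add_distrib]
  map_smul c a := by simp only [matPhi, Matrix.smul_apply, smul_assoc, Finset.smul_sum]

lemma map_matPhi (hf : IsLinearMap ℂ f) (v : Matrix (Fin n) (Fin n) E)
    (a : Matrix (Fin n) (Fin n) ℂ) : f (matPhi v a) = matPhi (matAmpl f v) a := by
  simp only [matPhi, matAmpl, of_apply, ← hf.mk'_apply, map_sum, map_smul]

lemma matPhi_single (i j : Fin n) (x : E) (a : Matrix (Fin n) (Fin n) ℂ) :
    matPhi (single i j x) a = a j i • x := by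
  simp [matPhi, single_apply, ite_and]

lemma matPhi_single_one (v : Matrix (Fin n) (Fin n) E) (i j : Fin n) :
    matPhi v (single j i 1) = v i j := by
  simp [matPhi, single_apply, ite_and]

/-- The universal element of `M_n(M̂_n)`, with `(i, j)` entry the matrix unit `e_{ji}`: every
`v ∈ M_n(E)` is its image under the amplification of the unique linear operator `φ^v`. -/
def universalMat (n : ℕ) : Matrix (Fin n) (Fin n) (Matrix (Fin n) (Fin n) ℂ) :=
  of fun i j ↦ single j i 1

lemma matAmpl_matPhi_universalMat (v : Matrix (Fin n) (Fin n) E) :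
    matAmpl (matPhi v) (universalMat n) = v := by
  ext i j
  exact matPhi_single_one v i j

lemma matPhi_matAmpl_universalMat {g : Matrix (Fin n) (Fin n) ℂ → E} (hg : IsLinearMap ℂ g) :
    matPhi (matAmpl g (universalMat n)) = g := by
  have hid (a : Matrix (Fin n) (Fin n) ℂ) : matPhi (universalMat n) a = a := by
    rw [matPhi, Finset.sum_comm]
    simpa [universalMat] using (matrix_eq_sum_single a).symm
  funext a
  rw [← map_matPhi hg, hid]

end Amplification

section OperatorNorm

open scoped Matrix.Norms.L2Operator

variable {m : ℕ}

lemma opNorm_eq_norm (S : Matrix (Fin m) (Fin m) ℂ) : opNorm S = ‖S‖ := rfl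

lemma opNorm_nonneg (S : Matrix (Fin m) (Fin m) ℂ) : 0 ≤ opNorm S := norm_nonneg _

lemma opNorm_single_one (i j : Fin m) : opNorm (single i j 1) = 1 := by
  have hsq : ‖(single i j 1 : Matrix (Fin m) (Fin m) ℂ)‖ * ‖(single i j 1 : Matrix _ _ ℂ)‖ = 1 := by
    rw [← l2_opNorm_conjTranspose_mul_self, conjTranspose_single, single_mul_single_same,
      ← diagonal_single, l2_opNorm_diagonal, Pi.norm_single]
    simp
  rw [opNorm_eq_norm]
  nlinarith [norm_nonneg (single i j 1 : Matrix (Fin m) (Fin m) ℂ)]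

/-- The corner embedding `S ↦ S ⊕ 0` of matrix algebras, as a star homomorphism. -/
def cornerStarHom (m k : ℕ) :
    Matrix (Fin m) (Fin m) ℂ →⋆ₙₐ[ℂ] Matrix (Fin (m + k)) (Fin (m + k)) ℂ where
  toFun S := MatDSum S 0
  map_smul' c S := by
    ext i j
    induction i using Fin.addCases <;> induction j using Fin.addCases <;> simp [MatDSum]
  map_zero' := by simp [MatDSum]
  map_add' S T := by
    ext i j
    induction i using Fin.addCases <;> induction j using Fin.addCases <;> simp [MatDSum]
  map_mul' S T := by simp [MatDSum, submatrix_mul_equiv, fromBlocks_multiply]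
  map_star' S := by simp [MatDSum, star_eq_conjTranspose, fromBlocks_conjTranspose]

lemma cornerStarHom_injective (m k : ℕ) : Function.Injective (cornerStarHom m k) := fun _ _ h ↦
  (fromBlocks_inj.1 ((reindex finSumFinEquiv finSumFinEquiv).injective h)).1

lemma opNorm_matDSum_zero (k : ℕ) (S : Matrix (Fin m) (Fin m) ℂ) :
    opNorm (MatDSum S (0 : Matrix (Fin k) (Fin k) ℂ)) = opNorm S :=
  NonUnitalStarAlgHom.norm_map (cornerStarHom m k) (cornerStarHom_injective m k) S

lemma scalLeft_eq_mul (S u : Matrix (Fin m) (Fin m) ℂ) : scalLeft S u = S * u := rfl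

lemma scalRight_eq_mul (u S : Matrix (Fin m) (Fin m) ℂ) : scalRight u S = u * S := by
  ext i j
  simp only [scalRight, of_apply, smul_eq_mul, mul_apply, mul_comm]

lemma isMatrixNorm_opNorm : IsMatrixNorm (E := ℂ) (fun _ ↦ opNorm) :=
  ⟨fun _ ↦ norm_add_le, fun _ ↦ norm_smul, fun _ u ↦ norm_eq_zero (a := u),
    fun _ ↦ opNorm_matDSum_zero,
    fun _ S u ↦ (congrArg opNorm (scalLeft_eq_mul S u)).trans_le (l2_opNorm_mul S u),
    fun _ u S ↦ (congrArg opNorm (scalRight_eq_mul u S)).trans_le (l2_opNorm_mul u S)⟩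

end OperatorNorm

namespace IsMatrixNorm

variable {E : Type} [AddCommGroup E] [Module ℂ E] {ν : ∀ m : ℕ, Matrix (Fin m) (Fin m) E → ℝ}
  {m n : ℕ}

lemma add_le (h : IsMatrixNorm ν) (u v : Matrix (Fin m) (Fin m) E) :
    ν m (u + v) ≤ ν m u + ν m v := h.1 m u v

lemma smul (h : IsMatrixNorm ν) (c : ℂ) (u : Matrix (Fin m) (Fin m) E) :
    ν m (c • u) = ‖c‖ * ν m u := h.2.1 m c u

lemma eq_zero_iff (h : IsMatrixNorm ν) {u : Matrix (Fin m) (Fin m) E} : ν m u = 0 ↔ u = 0 :=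
  h.2.2.1 m u

lemma matDSum_zero (h : IsMatrixNorm ν) (k : ℕ) (u : Matrix (Fin m) (Fin m) E) :
    ν (m + k) (MatDSum u 0) = ν m u := h.2.2.2.1 m k u

lemma scalLeft_le (h : IsMatrixNorm ν) (S : Matrix (Fin m) (Fin m) ℂ)
    (u : Matrix (Fin m) (Fin m) E) : ν m (scalLeft S u) ≤ opNorm S * ν m u := h.2.2.2.2.1 m S u

lemma scalRight_le (h : IsMatrixNorm ν) (u : Matrix (Fin m) (Fin m) E)
    (S : Matrix (Fin m) (Fin m) ℂ) : ν m (scalRight u S) ≤ ν m u * opNorm S := h.2.2.2.2.2 m u S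

lemma zero (h : IsMatrixNorm ν) (m : ℕ) : ν m 0 = 0 := h.eq_zero_iff.2 rfl

lemma nonneg (h : IsMatrixNorm ν) (u : Matrix (Fin m) (Fin m) E) : 0 ≤ ν m u :=
  apply_nonneg (Seminorm.of (ν m) h.add_le h.smul) u

lemma sum_le (h : IsMatrixNorm ν) {ι : Type*} (s : Finset ι) (u : ι → Matrix (Fin m) (Fin m) E) :
    ν m (∑ i ∈ s, u i) ≤ ∑ i ∈ s, ν m (u i) :=
  Finset.le_sum_of_subadditive (ν m) (h.zero m).le h.add_le s u

lemma single_apply_le_self (h : IsMatrixNorm ν) (u : Matrix (Fin m) (Fin m) E) (a b c d : Fin m) :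
    ν m (single a b (u c d)) ≤ ν m u :=
  calc ν m (single a b (u c d))
      = ν m (scalLeft (single a c 1) (scalRight u (single d b 1))) := by
        rw [scalLeft_single_scalRight_single]
    _ ≤ opNorm (single a c 1) * (ν m u * opNorm (single d b 1)) :=
        (h.scalLeft_le _ _).trans
          (mul_le_mul_of_nonneg_left (h.scalRight_le _ _) (opNorm_nonneg _))
    _ = ν m u := by rw [opNorm_single_one, opNorm_single_one, one_mul, mul_one]

lemma single_eq (h : IsMatrixNorm ν) (a b : Fin m) (x : E) :
    ν m (single a b x) = ν 1 (single 0 0 x) := by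
  obtain ⟨k, rfl⟩ : ∃ k, m = 1 + k := Nat.exists_eq_add_of_le a.pos
  have hmove (a b c d : Fin (1 + k)) : ν (1 + k) (single a b x) ≤ ν (1 + k) (single c d x) := by
    simpa only [single_apply_same] using h.single_apply_le_self (single c d x) a b c d
  calc ν (1 + k) (single a b x)
      = ν (1 + k) (single (Fin.castAdd k 0) (Fin.castAdd k 0) x) :=
        le_antisymm (hmove _ _ _ _) (hmove _ _ _ _)
    _ = ν 1 (single 0 0 x) := by rw [← matDSum_single_zero, h.matDSum_zero]

lemma single_apply_le (h : IsMatrixNorm ν) (v : Matrix (Fin n) (Fin n) E) (i j : Fin n)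
    (a b : Fin m) : ν m (single a b (v i j)) ≤ ν n v := by
  rw [h.single_eq a b, ← h.single_eq i j]
  exact h.single_apply_le_self v i j i j

lemma single_matPhi_le (h : IsMatrixNorm ν) (v : Matrix (Fin n) (Fin n) E)
    (c : Matrix (Fin n) (Fin n) ℂ) (a b : Fin m) :
    ν m (single a b (matPhi v c)) ≤ (∑ i, ∑ j, ‖c j i‖) * ν n v := by
  have hexp : single a b (matPhi v c) = ∑ i, ∑ j, c j i • single a b (v i j) := by
    simp only [matPhi, ← singleLinearMap_apply ℂ, map_sum, map_smul]
  rw [hexp, Finset.sum_mul]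
  refine (h.sum_le _ _).trans (Finset.sum_le_sum fun i _ ↦ ?_)
  rw [Finset.sum_mul]
  refine (h.sum_le _ _).trans (Finset.sum_le_sum fun j _ ↦ ?_)
  rw [h.smul]
  exact mul_le_mul_of_nonneg_left (h.single_apply_le v i j a b) (norm_nonneg _)

lemma matAmpl_matPhi_le (h : IsMatrixNorm ν) (v : Matrix (Fin n) (Fin n) E)
    (u : Matrix (Fin m) (Fin m) (Matrix (Fin n) (Fin n) ℂ)) :
    ν m (matAmpl (matPhi v) u) ≤ (∑ a, ∑ b, ∑ i, ∑ j, ‖u a b j i‖) * ν n v := by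
  rw [matrix_eq_sum_single (matAmpl (matPhi v) u), Finset.sum_mul]
  refine (h.sum_le _ _).trans (Finset.sum_le_sum fun a _ ↦ ?_)
  rw [Finset.sum_mul]
  exact (h.sum_le _ _).trans (Finset.sum_le_sum fun b _ ↦ h.single_matPhi_le v (u a b) a b)

end IsMatrixNorm

section HatNorm

variable {n m : ℕ}

lemma bddAbove_hatNormSet (u : Matrix (Fin m) (Fin m) (Matrix (Fin n) (Fin n) ℂ)) :
    BddAbove (hatNormSet n u) := by
  refine ⟨∑ a, ∑ b, ∑ i, ∑ j, ‖u a b j i‖, ?_⟩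
  rintro _ ⟨E, _, _, ν, hν, v, hv, rfl⟩
  exact (hν.matAmpl_matPhi_le v u).trans (mul_le_of_le_one_right (by positivity) hv)

lemma le_hatNorm {E : Type} [AddCommGroup E] [Module ℂ E]
    {ν : ∀ m : ℕ, Matrix (Fin m) (Fin m) E → ℝ} (hν : IsMatrixNorm ν)
    {v : Matrix (Fin n) (Fin n) E} (hv : ν n v ≤ 1)
    (u : Matrix (Fin m) (Fin m) (Matrix (Fin n) (Fin n) ℂ)) :
    ν m (matAmpl (matPhi v) u) ≤ hatNorm n u :=
  le_csSup (bddAbove_hatNormSet u) ⟨E, _, _, ν, hν, v, hv, rfl⟩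

lemma hatNorm_le {u : Matrix (Fin m) (Fin m) (Matrix (Fin n) (Fin n) ℂ)} {C : ℝ}
    (H : ∀ (E : Type) [AddCommGroup E] [Module ℂ E] (ν : ∀ m : ℕ, Matrix (Fin m) (Fin m) E → ℝ),
      IsMatrixNorm ν → ∀ v : Matrix (Fin n) (Fin n) E, ν n v ≤ 1 → ν m (matAmpl (matPhi v) u) ≤ C) :
    hatNorm n u ≤ C := by
  have hne : (hatNormSet n u).Nonempty :=
    ⟨_, ℂ, inferInstance, inferInstance, _, isMatrixNorm_opNorm, 0,
      (isMatrixNorm_opNorm.zero n).trans_le zero_le_one, rfl⟩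
  refine csSup_le hne ?_
  rintro _ ⟨E, _, _, ν, hν, v, hv, rfl⟩
  exact H E ν hν v hv

lemma hatNorm_nonneg (u : Matrix (Fin m) (Fin m) (Matrix (Fin n) (Fin n) ℂ)) : 0 ≤ hatNorm n u :=
  (isMatrixNorm_opNorm.nonneg _).trans <|
    le_hatNorm (v := 0) isMatrixNorm_opNorm ((isMatrixNorm_opNorm.zero n).trans_le zero_le_one) u

lemma hatNorm_zero : hatNorm n (0 : Matrix (Fin m) (Fin m) (Matrix (Fin n) (Fin n) ℂ)) = 0 :=
  le_antisymm
    (hatNorm_le fun E _ _ ν hν v _ ↦ by rw [matAmpl_zero (isLinearMap_matPhi v), hν.zero])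
    (hatNorm_nonneg 0)

lemma hatNorm_add_le (u w : Matrix (Fin m) (Fin m) (Matrix (Fin n) (Fin n) ℂ)) :
    hatNorm n (u + w) ≤ hatNorm n u + hatNorm n w := by
  refine hatNorm_le fun E _ _ ν hν v hv ↦ ?_
  rw [matAmpl_add (isLinearMap_matPhi v)]
  exact (hν.add_le _ _).trans (add_le_add (le_hatNorm hν hv u) (le_hatNorm hν hv w))

lemma hatNorm_smul (c : ℂ) (u : Matrix (Fin m) (Fin m) (Matrix (Fin n) (Fin n) ℂ)) :
    hatNorm n (c • u) = ‖c‖ * hatNorm n u := by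
  refine (Seminorm.ofSMulLE (hatNorm n) hatNorm_zero hatNorm_add_le fun c u ↦ ?_).smul' c u
  refine hatNorm_le fun E _ _ ν hν v hv ↦ ?_
  rw [matAmpl_smul (isLinearMap_matPhi v), hν.smul]
  exact mul_le_mul_of_nonneg_left (le_hatNorm hν hv u) (norm_nonneg c)

lemma eq_zero_of_hatNorm_eq_zero {u : Matrix (Fin m) (Fin m) (Matrix (Fin n) (Fin n) ℂ)}
    (hu : hatNorm n u = 0) : u = 0 := by
  ext a b i j
  have hle : opNorm (matAmpl (matPhi (single j i (1 : ℂ))) u) ≤ 0 :=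
    (le_hatNorm isMatrixNorm_opNorm (opNorm_single_one j i).le u).trans_eq hu
  have hzero : matAmpl (matPhi (single j i (1 : ℂ))) u = 0 :=
    isMatrixNorm_opNorm.eq_zero_iff.1 (hle.antisymm (opNorm_nonneg _))
  have hentry : matPhi (single j i (1 : ℂ)) (u a b) = 0 := congr_fun₂ hzero a b
  rwa [matPhi_single, smul_eq_mul, mul_one] at hentry

lemma hatNorm_matDSum_zero (k : ℕ) (u : Matrix (Fin m) (Fin m) (Matrix (Fin n) (Fin n) ℂ)) :
    hatNorm n (MatDSum u (0 : Matrix (Fin k) (Fin k) _)) = hatNorm n u := by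
  refine le_antisymm (hatNorm_le fun E _ _ ν hν v hv ↦ ?_) (hatNorm_le fun E _ _ ν hν v hv ↦ ?_)
  · rw [matAmpl_matDSum_zero (isLinearMap_matPhi v), hν.matDSum_zero]
    exact le_hatNorm hν hv u
  · rw [← hν.matDSum_zero k, ← matAmpl_matDSum_zero (isLinearMap_matPhi v)]
    exact le_hatNorm hν hv _

theorem isMatrixNorm_hatNorm (n : ℕ) :
    IsMatrixNorm (E := Matrix (Fin n) (Fin n) ℂ) (fun _ ↦ hatNorm n) := by
  refine ⟨fun _ ↦ hatNorm_add_le, fun _ ↦ hatNorm_smul,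
    fun _ u ↦ ⟨eq_zero_of_hatNorm_eq_zero, fun hu ↦ hu ▸ hatNorm_zero⟩,
    fun _ ↦ hatNorm_matDSum_zero, fun m S u ↦ hatNorm_le fun E _ _ ν hν v hv ↦ ?_,
    fun m u S ↦ hatNorm_le fun E _ _ ν hν v hv ↦ ?_⟩
  · rw [matAmpl_scalLeft (isLinearMap_matPhi v)]
    exact (hν.scalLeft_le _ _).trans
      (mul_le_mul_of_nonneg_left (le_hatNorm hν hv u) (opNorm_nonneg S))
  · rw [matAmpl_scalRight (isLinearMap_matPhi v)]
    exact (hν.scalRight_le _ _).trans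
      (mul_le_mul_of_nonneg_right (le_hatNorm hν hv u) (opNorm_nonneg S))

lemma hatNorm_universalMat_le (n : ℕ) : hatNorm n (universalMat n) ≤ 1 :=
  hatNorm_le fun E _ _ ν _ v hv ↦ by rwa [matAmpl_matPhi_universalMat]

lemma isCC_matPhi {E : Type} [AddCommGroup E] [Module ℂ E]
    {ν : ∀ m : ℕ, Matrix (Fin m) (Fin m) E → ℝ} (hν : IsMatrixNorm ν)
    {v : Matrix (Fin n) (Fin n) E} (hv : ν n v ≤ 1) :
    IsCC (fun _ ↦ hatNorm n) ν (matPhi v) :=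
  ⟨isLinearMap_matPhi v, fun _ ↦ le_hatNorm hν hv⟩

end HatNorm

section Sum

variable {ι : Type} {E : ι → Type} [∀ i, AddCommGroup (E i)] {m : ℕ}

lemma finite_setOf_compMat_ne_zero (u : Matrix (Fin m) (Fin m) (⨁ i, E i)) :
    {i | compMat u i ≠ 0}.Finite := by
  classical
  refine (Set.finite_iUnion fun a ↦ Set.finite_iUnion fun b ↦
    (DFinsupp.support (u a b)).finite_toSet).subset fun i hi ↦ ?_
  contrapose! hi
  simp only [Set.mem_iUnion, not_exists, Finset.mem_coe, DFinsupp.notMem_support_iff] at hi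
  exact not_not_intro (Matrix.ext hi)

variable [∀ i, Module ℂ (E i)] {ν : ∀ i, ∀ m : ℕ, Matrix (Fin m) (Fin m) (E i) → ℝ}

lemma isLinearMap_apply_directSum (i : ι) : IsLinearMap ℂ fun x : ⨁ i, E i ↦ x i :=
  (DirectSum.component ℂ ι E i).isLinear

lemma compMat_smul (c : ℂ) (u : Matrix (Fin m) (Fin m) (⨁ i, E i)) (i : ι) :
    compMat (c • u) i = c • compMat u i := rfl

lemma compMat_matDSum_zero (k : ℕ) (u : Matrix (Fin m) (Fin m) (⨁ i, E i)) (i : ι) :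
    compMat (MatDSum u (0 : Matrix (Fin k) (Fin k) _)) i = MatDSum (compMat u i) 0 :=
  matAmpl_matDSum_zero (isLinearMap_apply_directSum i) k u

lemma compMat_scalLeft (S : Matrix (Fin m) (Fin m) ℂ) (u : Matrix (Fin m) (Fin m) (⨁ i, E i))
    (i : ι) : compMat (scalLeft S u) i = scalLeft S (compMat u i) :=
  matAmpl_scalLeft (isLinearMap_apply_directSum i) S u

lemma compMat_scalRight (u : Matrix (Fin m) (Fin m) (⨁ i, E i)) (S : Matrix (Fin m) (Fin m) ℂ)
    (i : ι) : compMat (scalRight u S) i = scalRight (compMat u i) S :=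
  matAmpl_scalRight (isLinearMap_apply_directSum i) u S

lemma compMat_matAmpl_lof_self [DecidableEq ι] (i : ι) (u : Matrix (Fin m) (Fin m) (E i)) :
    compMat (matAmpl (DirectSum.lof ℂ ι E i) u) i = u := by
  ext a b
  exact DirectSum.of_eq_same i (u a b)

lemma compMat_matAmpl_lof_of_ne [DecidableEq ι] {i j : ι} (hij : j ≠ i)
    (u : Matrix (Fin m) (Fin m) (E i)) : compMat (matAmpl (DirectSum.lof ℂ ι E i) u) j = 0 := by
  ext a b
  exact DirectSum.of_eq_of_ne i j (u a b) hij

lemma eq_sum_matAmpl_lof_compMat [DecidableEq ι] (u : Matrix (Fin m) (Fin m) (⨁ i, E i)) :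
    u = ∑ i ∈ (finite_setOf_compMat_ne_zero u).toFinset,
      matAmpl (DirectSum.lof ℂ ι E i) (compMat u i) := by
  classical
  refine Matrix.ext fun a b ↦ ?_
  rw [Matrix.sum_apply]
  refine (DirectSum.sum_support_of (u a b)).symm.trans
    (Finset.sum_subset (fun i hi ↦ ?_) fun i _ hi ↦ ?_)
  · rw [Set.Finite.mem_toFinset]
    exact fun h0 ↦ DFinsupp.mem_support_iff.1 hi (congr_fun₂ h0 a b)
  · rw [DFinsupp.notMem_support_iff.1 hi, map_zero]

lemma hasFiniteSupport_norm_compMat (hν : ∀ i, IsMatrixNorm (ν i))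
    (u : Matrix (Fin m) (Fin m) (⨁ i, E i)) :
    Function.HasFiniteSupport fun i ↦ ν i m (compMat u i) :=
  (finite_setOf_compMat_ne_zero u).subset fun i hi ↦ mt (hν i).eq_zero_iff.2 hi

lemma l1Norm_eq_sum (hν : ∀ i, IsMatrixNorm (ν i)) (u : Matrix (Fin m) (Fin m) (⨁ i, E i)) :
    l1Norm ν m u = ∑ i ∈ (finite_setOf_compMat_ne_zero u).toFinset, ν i m (compMat u i) :=
  finsum_eq_sum_of_support_subset _ fun i hi ↦ by
    simpa using mt (hν i).eq_zero_iff.2 hi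

lemma l1Norm_add_le (hν : ∀ i, IsMatrixNorm (ν i)) (u v : Matrix (Fin m) (Fin m) (⨁ i, E i)) :
    l1Norm ν m (u + v) ≤ l1Norm ν m u + l1Norm ν m v := by
  have hu := hasFiniteSupport_norm_compMat hν u
  have hv := hasFiniteSupport_norm_compMat hν v
  calc l1Norm ν m (u + v)
      ≤ ∑ᶠ i, (ν i m (compMat u i) + ν i m (compMat v i)) :=
        finsum_le_finsum' (hasFiniteSupport_norm_compMat hν (u + v)) (hu.add hv)
          fun i ↦ (hν i).add_le (compMat u i) (compMat v i)
    _ = l1Norm ν m u + l1Norm ν m v := finsum_add_distrib hu hv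

lemma l1Norm_smul (hν : ∀ i, IsMatrixNorm (ν i)) (c : ℂ)
    (u : Matrix (Fin m) (Fin m) (⨁ i, E i)) : l1Norm ν m (c • u) = ‖c‖ * l1Norm ν m u := by
  simp only [l1Norm, compMat_smul, (hν _).smul, mul_finsum]

lemma l1Norm_eq_zero_iff (hν : ∀ i, IsMatrixNorm (ν i))
    {u : Matrix (Fin m) (Fin m) (⨁ i, E i)} : l1Norm ν m u = 0 ↔ u = 0 := by
  classical
  rw [l1Norm_eq_sum hν, Finset.sum_eq_zero_iff_of_nonneg fun i _ ↦ (hν i).nonneg _]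
  refine ⟨fun h ↦ ?_, fun h i _ ↦ (hν i).eq_zero_iff.2 (by subst h; rfl)⟩
  rw [eq_sum_matAmpl_lof_compMat u]
  refine Finset.sum_eq_zero fun i hi ↦ ?_
  rw [(hν i).eq_zero_iff.1 (h i hi), matAmpl_zero (LinearMap.isLinear _)]

lemma l1Norm_matDSum_zero (hν : ∀ i, IsMatrixNorm (ν i)) (k : ℕ)
    (u : Matrix (Fin m) (Fin m) (⨁ i, E i)) :
    l1Norm ν (m + k) (MatDSum u 0) = l1Norm ν m u := by
  simp only [l1Norm, compMat_matDSum_zero, (hν _).matDSum_zero]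

lemma l1Norm_scalLeft_le (hν : ∀ i, IsMatrixNorm (ν i)) (S : Matrix (Fin m) (Fin m) ℂ)
    (u : Matrix (Fin m) (Fin m) (⨁ i, E i)) :
    l1Norm ν m (scalLeft S u) ≤ opNorm S * l1Norm ν m u := by
  have hu := hasFiniteSupport_norm_compMat hν u
  rw [l1Norm, l1Norm, mul_finsum]
  refine finsum_le_finsum' (hasFiniteSupport_norm_compMat hν _)
    (hu.mul_right _) fun i ↦ ?_
  rw [compMat_scalLeft]
  exact (hν i).scalLeft_le S (compMat u i)

lemma l1Norm_scalRight_le (hν : ∀ i, IsMatrixNorm (ν i)) (u : Matrix (Fin m) (Fin m) (⨁ i, E i))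
    (S : Matrix (Fin m) (Fin m) ℂ) :
    l1Norm ν m (scalRight u S) ≤ l1Norm ν m u * opNorm S := by
  have hu := hasFiniteSupport_norm_compMat hν u
  rw [l1Norm, l1Norm, finsum_mul]
  refine finsum_le_finsum' (hasFiniteSupport_norm_compMat hν _)
    (hu.mul_left _) fun i ↦ ?_
  rw [compMat_scalRight]
  exact (hν i).scalRight_le (compMat u i) S

theorem isMatrixNorm_l1Norm (hν : ∀ i, IsMatrixNorm (ν i)) : IsMatrixNorm (l1Norm ν) :=
  ⟨fun _ ↦ l1Norm_add_le hν, fun _ ↦ l1Norm_smul hν, fun _ _ ↦ l1Norm_eq_zero_iff hν,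
    fun _ ↦ l1Norm_matDSum_zero hν, fun _ ↦ l1Norm_scalLeft_le hν,
    fun _ ↦ l1Norm_scalRight_le hν⟩

lemma l1Norm_matAmpl_lof [DecidableEq ι] (hν : ∀ i, IsMatrixNorm (ν i)) (i : ι)
    (u : Matrix (Fin m) (Fin m) (E i)) :
    l1Norm ν m (matAmpl (DirectSum.lof ℂ ι E i) u) = ν i m u := by
  rw [l1Norm, finsum_eq_single _ i fun j hj ↦ by
    rw [compMat_matAmpl_lof_of_ne hj, (hν j).zero], compMat_matAmpl_lof_self]

lemma isCC_lof [DecidableEq ι] (hν : ∀ i, IsMatrixNorm (ν i)) (i : ι) :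
    IsCC (ν i) (l1Norm ν) (DirectSum.lof ℂ ι E i) :=
  ⟨LinearMap.isLinear _, fun _ u ↦ (l1Norm_matAmpl_lof hν i u).le⟩

variable {F : Type} [AddCommGroup F] [Module ℂ F] {νF : ∀ m : ℕ, Matrix (Fin m) (Fin m) F → ℝ}

lemma matAmpl_toModule_matAmpl_lof [DecidableEq ι] (f : ∀ i, E i →ₗ[ℂ] F) (i : ι)
    (u : Matrix (Fin m) (Fin m) (E i)) :
    matAmpl (DirectSum.toModule ℂ ι F f) (matAmpl (DirectSum.lof ℂ ι E i) u) =
      matAmpl (f i) u := by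
  ext a b
  exact DirectSum.toModule_lof ℂ i (u a b)

lemma isCC_toModule [DecidableEq ι] (hν : ∀ i, IsMatrixNorm (ν i)) (hF : IsMatrixNorm νF)
    {f : ∀ i, E i →ₗ[ℂ] F} (hf : ∀ i, IsCC (ν i) νF (f i)) :
    IsCC (l1Norm ν) νF (DirectSum.toModule ℂ ι F f) := by
  refine ⟨LinearMap.isLinear _, fun m u ↦ ?_⟩
  calc νF m (matAmpl (DirectSum.toModule ℂ ι F f) u)
      = νF m (∑ i ∈ (finite_setOf_compMat_ne_zero u).toFinset, matAmpl (f i) (compMat u i)) := by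
        conv_lhs => rw [eq_sum_matAmpl_lof_compMat u, matAmpl_sum (LinearMap.isLinear _)]
        simp only [matAmpl_toModule_matAmpl_lof]
    _ ≤ ∑ i ∈ (finite_setOf_compMat_ne_zero u).toFinset, ν i m (compMat u i) :=
        (hF.sum_le _ _).trans (Finset.sum_le_sum fun i _ ↦ (hf i).2 m _)
    _ = l1Norm ν m u := (l1Norm_eq_sum hν u).symm

end Sum

section Projective

variable {E F G : Type} [AddCommGroup E] [Module ℂ E] [AddCommGroup F] [Module ℂ F]
  [AddCommGroup G] [Module ℂ G] {νE : ∀ m : ℕ, Matrix (Fin m) (Fin m) E → ℝ}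
  {νF : ∀ m : ℕ, Matrix (Fin m) (Fin m) F → ℝ} {νG : ∀ m : ℕ, Matrix (Fin m) (Fin m) G → ℝ}

lemma IsCC.comp {ψ : F → G} {φ : E → F} (hψ : IsCC νF νG ψ) (hφ : IsCC νE νF φ) :
    IsCC νE νG (ψ ∘ φ) :=
  ⟨(hψ.1.mk' ∘ₗ hφ.1.mk').isLinear, fun m u ↦ (hψ.2 m (matAmpl φ u)).trans (hφ.2 m u)⟩

lemma isCC_id : IsCC νE νE id := ⟨LinearMap.id.isLinear, fun _ _ ↦ le_rfl⟩

lemma IsCSC.exists_lift {τ : E → F} (hτ : IsCSC νE νF τ) {m : ℕ} {w : Matrix (Fin m) (Fin m) F}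
    (hw : νF m w ≤ 1) : ∃ u, νE m u ≤ 1 ∧ matAmpl τ u = w :=
  (hτ.2 m).superset hw

lemma IsCSC.isCC {τ : E → F} (hτ : IsCSC νE νF τ) (hE : IsMatrixNorm νE) (hF : IsMatrixNorm νF) :
    IsCC νE νF τ := by
  refine ⟨hτ.1, fun m u ↦ ?_⟩
  obtain hu | hu := (hE.nonneg u).eq_or_lt
  · rw [hE.eq_zero_iff.1 hu.symm, matAmpl_zero hτ.1, hE.zero, hF.zero]
  have hnorm : ‖((νE m u)⁻¹ : ℂ)‖ = (νE m u)⁻¹ := by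
    rw [norm_inv, Complex.norm_of_nonneg hu.le]
  have hball : νF m (matAmpl τ (((νE m u)⁻¹ : ℂ) • u)) ≤ 1 :=
    (hτ.2 m).subset ⟨_, by rw [Set.mem_ofPred_eq, hE.smul, hnorm, inv_mul_cancel₀ hu.ne'], rfl⟩
  rwa [matAmpl_smul hτ.1, hF.smul, hnorm, inv_mul_le_one₀ hu] at hball

lemma metricallyProjective_hatNorm (n : ℕ) :
    MetricallyProjective (P := Matrix (Fin n) (Fin n) ℂ) (fun _ ↦ hatNorm n) := by
  intro E F _ _ _ _ νE νF hE _ τ hτ φ hφ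
  obtain ⟨v, hv, hτv⟩ : ∃ v, νE n v ≤ 1 ∧ matAmpl τ v = matAmpl φ (universalMat n) :=
    hτ.exists_lift ((hφ.2 n _).trans (hatNorm_universalMat_le n))
  refine ⟨matPhi v, isCC_matPhi hE hv, funext fun a ↦ ?_⟩
  rw [Function.comp_apply, map_matPhi hτ.1, hτv, matPhi_matAmpl_universalMat hφ.1]

lemma metricallyProjective_l1Norm {ι : Type} {E : ι → Type} [∀ i, AddCommGroup (E i)]
    [∀ i, Module ℂ (E i)] {ν : ∀ i, ∀ m : ℕ, Matrix (Fin m) (Fin m) (E i) → ℝ}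
    (hν : ∀ i, IsMatrixNorm (ν i)) (H : ∀ i, MetricallyProjective (ν i)) :
    MetricallyProjective (l1Norm ν) := by
  classical
  intro X Y _ _ _ _ νX νY hX hY τ hτ φ hφ
  choose ψ hψ hτψ using fun i ↦
    H i X Y _ _ _ _ νX νY hX hY τ hτ (φ ∘ DirectSum.lof ℂ ι E i) (hφ.comp (isCC_lof hν i))
  refine ⟨DirectSum.toModule ℂ ι X fun i ↦ (hψ i).1.mk', isCC_toModule hν hX hψ, ?_⟩
  have hlin : hτ.1.mk' ∘ₗ (DirectSum.toModule ℂ ι X fun i ↦ (hψ i).1.mk') = hφ.1.mk' := by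
    refine DirectSum.linearMap_ext ℂ fun i ↦ LinearMap.ext fun x ↦ ?_
    simpa using congr_fun (hτψ i) x
  exact congrArg DFunLike.coe hlin

lemma IsCompleteDirectSummand.metricallyProjective (H : IsCompleteDirectSummand νE νG)
    (hG : MetricallyProjective νG) : MetricallyProjective νE := by
  obtain ⟨α, π, hα, hnorm, hπ, hπα⟩ := H
  intro X Y _ _ _ _ νX νY hX hY τ hτ φ hφ
  obtain ⟨ψ, hψ, hτψ⟩ := hG X Y _ _ _ _ νX νY hX hY τ hτ (φ ∘ π) (hφ.comp hπ)
  refine ⟨ψ ∘ α, hψ.comp ⟨hα, fun m u ↦ (hnorm m u).le⟩, ?_⟩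
  rw [← Function.comp_assoc, hτψ, Function.comp_assoc, hπα, Function.comp_id]

lemma MetricallyProjective.isCompleteDirectSummand (H : MetricallyProjective νF)
    (hF : IsMatrixNorm νF) (hE : IsMatrixNorm νE) {τ : E → F} (hτ : IsCSC νE νF τ) :
    IsCompleteDirectSummand νF νE := by
  obtain ⟨σ, hσ, hτσ⟩ := H E F _ _ _ _ νE νF hE hF τ hτ id isCC_id
  have hτCC := hτ.isCC hE hF
  refine ⟨σ, τ, hσ.1, fun m u ↦ (hσ.2 m u).antisymm ?_, hτCC, hτσ⟩
  have hretract : matAmpl τ (matAmpl σ u) = u := Matrix.ext fun a b ↦ congr_fun hτσ (u a b)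
  exact (congrArg (νF m) hretract).symm.trans_le (hτCC.2 m _)

end Projective

section HatComposed

lemma isMatrixNorm_hatComposedNorm {ι : Type} (d : ι → ℕ) :
    IsMatrixNorm (hatComposedNorm ι d) :=
  isMatrixNorm_l1Norm fun i ↦ isMatrixNorm_hatNorm (d i)

lemma metricallyProjective_hatComposedNorm {ι : Type} (d : ι → ℕ) :
    MetricallyProjective (hatComposedNorm ι d) :=
  metricallyProjective_l1Norm (fun i ↦ isMatrixNorm_hatNorm (d i))
    fun i ↦ metricallyProjective_hatNorm (d i)

variable {P : Type} [AddCommGroup P] [Module ℂ P] {νP : ∀ m : ℕ, Matrix (Fin m) (Fin m) P → ℝ}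

/-- The disjoint union of the closed unit balls of `M_n(P)`, `n ≥ 1`. The first component of an
element is `n - 1`. -/
abbrev UnitBalls (νP : ∀ m : ℕ, Matrix (Fin m) (Fin m) P → ℝ) : Type :=
  Σ n : ℕ, {v : Matrix (Fin (n + 1)) (Fin (n + 1)) P // νP (n + 1) v ≤ 1}

open scoped Classical in
/-- The canonical operator onto `P` from the `ℓ¹`-sum of one copy of `M̂_n` for each `v` in the
unit ball of `M_n(P)`, acting as `φ^v` on the copy indexed by `v`. -/
def unitBallCover (νP : ∀ m : ℕ, Matrix (Fin m) (Fin m) P → ℝ) :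
    HatComposed (UnitBalls νP) (fun i ↦ i.1 + 1) →ₗ[ℂ] P :=
  DirectSum.toModule ℂ _ P fun i ↦ (isLinearMap_matPhi i.2.1).mk'

lemma isCC_unitBallCover (hP : IsMatrixNorm νP) :
    IsCC (hatComposedNorm (UnitBalls νP) fun i ↦ i.1 + 1) νP (unitBallCover νP) := by
  classical
  exact isCC_toModule (fun i ↦ isMatrixNorm_hatNorm (i.1 + 1)) hP fun i ↦ isCC_matPhi hP i.2.2

lemma isCSC_unitBallCover (hP : IsMatrixNorm νP) :
    IsCSC (hatComposedNorm (UnitBalls νP) fun i ↦ i.1 + 1) νP (unitBallCover νP) := by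
  classical
  refine ⟨LinearMap.isLinear _, fun m ↦ Set.Subset.antisymm ?_ fun w hw ↦ ?_⟩
  · rintro _ ⟨u, hu, rfl⟩
    exact ((isCC_unitBallCover hP).2 m u).trans hu
  · cases m with
    | zero =>
      exact ⟨0, ((isMatrixNorm_hatComposedNorm _).zero 0).trans_le zero_le_one,
        Subsingleton.elim _ _⟩
    | succ n =>
      let i : UnitBalls νP := ⟨n, w, hw⟩
      refine ⟨matAmpl (DirectSum.lof ℂ _ (fun j ↦ Matrix (Fin (j.1 + 1)) (Fin (j.1 + 1)) ℂ) i)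
        (universalMat (n + 1)), ?_, ?_⟩
      · exact (l1Norm_matAmpl_lof (fun j ↦ isMatrixNorm_hatNorm (j.1 + 1)) i _).trans_le
          (hatNorm_universalMat_le (n + 1))
      · exact (matAmpl_toModule_matAmpl_lof _ i _).trans (matAmpl_matPhi_universalMat w)

end HatComposed

/-- **Theorem 5 (ii).** A matricially normed space is metrically projective if, and only
if, it is a complete direct summand of an `M̂`-composed matricially normed space. -/
theorem metricallyProjective_iff (P : Type) [AddCommGroup P] [Module ℂ P]
    (νP : ∀ m : ℕ, Matrix (Fin m) (Fin m) P → ℝ) (hP : IsMatrixNorm νP) :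
    MetricallyProjective νP ↔
      ∃ (ι : Type) (d : ι → ℕ), (∀ i, 0 < d i) ∧
        IsCompleteDirectSummand νP (hatComposedNorm ι d) := by
  constructor
  · intro H
    exact ⟨UnitBalls νP, fun i ↦ i.1 + 1, fun i ↦ i.1.succ_pos,
      H.isCompleteDirectSummand hP (isMatrixNorm_hatComposedNorm _) (isCSC_unitBallCover hP)⟩
  · rintro ⟨ι, d, -, H⟩
    exact H.metricallyProjective (metricallyProjective_hatComposedNorm d)
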